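/- arXiv:2509.24034 — 4 statements merged into one kernel-verified Lean document; each statement's English description precedes it below -/
import Mathlib

section
/- Let G be a finite abelian group with |G| > 1. Then there exists a constant C > 0 (depending only on G) such that for every integer g ≥ 1, limsup_{n → ∞} η_g(G^n) / (√g · |G|^{n/2}) ≤ 1 + C/√g, where G^n denotes the direct product of n copies of G. -/
/-!
Write `m = |G|`. The bound comes from partial spreads. If `H_1, …, H_k` are subgroups of a group `U`
of order `√|U|` which are pairwise complementary, then every `x ∈ U` outside their union is a
difference `b₁ - b₂` with `b₁ ∈ H_i`, `b₂ ∈ H_j` in exactly one way for each ordered pair `i ≠ j`, and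
these `k (k - 1)` representations are distinct; an `x ∈ H_i` has at least `√|U|`
representations with both terms in `H_i`. So, once `√|U| ≥ k (k - 1)`,
`H_1 ∪ ⋯ ∪ H_k` is a `k (k - 1)`-difference basis of size at most `k √|U|`. Multiplying by a finite
group `W` multiplies both numbers by `|W|` (`exists_basis_of_spread`).

For `U = G^t × G^t` the subgroups are the graphs of endomorphisms `φ_i` of `G^t` whose pairwise
differences are invertible. Such a family exists for every large `t` (`exists_endomorphisms`): if
`P = X ∏_{d ≤ k} (X ^ d - 1)` and `f = X ^ (t - deg P) P + 1`, then `P` is a unit in `ℤ[X]/(f)`, hence so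
are the root `θ` and all `θ ^ d - 1`, and the powers `θ ^ i` have pairwise unit differences. The ring
`ℤ[X]/(f)` is free of rank `t` over `ℤ`, so it acts on `G^t` through integer `t × t` matrices.

For `n = 2 t + r` with `r ∈ {0, 1}` take `W = G^r` and `k = ⌈√(g / |W|)⌉ + 1`. Then
`k (k - 1) |W| ≥ g`, and the basis has at most `k |W| m ^ t = k √|W| m ^ (n / 2)
≤ (√g + 2 √m) m ^ (n / 2)` elements, so `C = 2 √m` works.
-/

open Filter Topology

/-- `B` is a `g`-difference basis for the additive group `G`: every `x ∈ G` has at least `g`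
representations `x = b₁ - b₂` with ordered pairs `(b₁, b₂) ∈ B × B`. -/
def IsDiffBasis {G : Type*} [AddCommGroup G] (g : ℕ) (B : Set G) : Prop :=
  ∀ x : G, g ≤ Nat.card {p : G × G // p.1 ∈ B ∧ p.2 ∈ B ∧ p.1 - p.2 = x}

/-- `η_g(G)`: the minimum size of a `g`-difference basis for `G`. -/
noncomputable def etaMin (G : Type*) [AddCommGroup G] (g : ℕ) : ℕ :=
  sInf {k : ℕ | ∃ B : Set G, B.Finite ∧ IsDiffBasis g B ∧ Nat.card B = k}

open Polynomial in
/-- For large `t` there is a monic integer polynomial of degree `t` modulo which the powers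
`1, X, …, X ^ (k - 1)` have pairwise invertible differences. -/
lemma exists_monic_unit_differences (k : ℕ) :
    ∃ T : ℕ, ∀ t ≥ T, ∃ f : ℤ[X], f.Monic ∧ f.natDegree = t ∧
      ∀ i j : Fin k, i ≠ j →
        IsUnit (AdjoinRoot.root f ^ (i : ℕ) - AdjoinRoot.root f ^ (j : ℕ)) := by
  set P : ℤ[X] := X * ∏ d ∈ Finset.range k, (X ^ (d + 1) - C 1) with hP
  have hPm : P.Monic := monic_X.mul
    (monic_prod_of_monic _ _ fun d _ => monic_X_pow_sub_C 1 d.succ_ne_zero)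
  have hPpos : 0 < P.natDegree := by
    rw [hP, natDegree_mul X_ne_zero
      (monic_prod_of_monic _ _ fun d _ => monic_X_pow_sub_C 1 d.succ_ne_zero).ne_zero]
    simp
  refine ⟨P.natDegree, fun t ht => ⟨X ^ (t - P.natDegree) * P + 1, ?_, ?_, ?_⟩⟩
  · refine ((monic_X_pow _).mul hPm).add_of_left (degree_lt_degree ?_)
    rw [(monic_X_pow _).natDegree_mul hPm]
    simp only [natDegree_one]
    omega
  · rw [natDegree_add_eq_left_of_natDegree_lt, (monic_X_pow _).natDegree_mul hPm, natDegree_X_pow]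
    · omega
    · rw [(monic_X_pow _).natDegree_mul hPm]
      simp only [natDegree_one]
      omega
  · set f : ℤ[X] := X ^ (t - P.natDegree) * P + 1 with hf
    -- modulo `f`, the product `X ^ (t - deg P) * P` is `-1`
    have hunit : IsUnit (AdjoinRoot.mk f P) := by
      have h0 : AdjoinRoot.mk f (X ^ (t - P.natDegree) * P + 1) = 0 := by
        rw [← hf]; exact AdjoinRoot.mk_self
      rw [map_add, map_mul, map_one] at h0
      refine IsUnit.of_mul_eq_one (-AdjoinRoot.mk f (X ^ (t - P.natDegree))) ?_
      linear_combination -h0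
    rw [hP, map_mul, map_prod, IsUnit.mul_iff, AdjoinRoot.mk_X] at hunit
    obtain ⟨hx, hd⟩ := hunit
    have hlt : ∀ i j : Fin k, i < j →
        IsUnit (AdjoinRoot.root f ^ (j : ℕ) - AdjoinRoot.root f ^ (i : ℕ)) := by
      intro i j hij
      have hmem : (j : ℕ) - i - 1 ∈ Finset.range k := by
        rw [Finset.mem_range]; omega
      have h1 := isUnit_of_dvd_unit (Finset.dvd_prod_of_mem _ hmem) hd
      have h2 : (j : ℕ) - i - 1 + 1 = j - i := by omega
      rw [h2] at h1
      simp only [map_sub, map_pow, AdjoinRoot.mk_X, map_one] at h1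
      have h3 : AdjoinRoot.root f ^ (j : ℕ) - AdjoinRoot.root f ^ (i : ℕ)
          = AdjoinRoot.root f ^ (i : ℕ) * (AdjoinRoot.root f ^ ((j : ℕ) - i) - 1) := by
        rw [mul_sub, mul_one, ← pow_add]
        congr 2
        omega
      rw [h3]
      exact (hx.pow _).mul h1
    intro i j hij
    rcases lt_or_gt_of_ne hij with h | h
    · rw [← neg_sub]
      exact (hlt i j h).neg
    · exact hlt j i h

open scoped Matrix.Module in
/-- For large `t` the group `G ^ t` has `k` endomorphisms with pairwise invertible differences. -/
lemma exists_endomorphisms (G : Type*) [AddCommGroup G] (k : ℕ) :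
    ∃ T : ℕ, ∀ t ≥ T, ∃ φ : Fin k → (Fin t → G) →+ (Fin t → G),
      ∀ i j, i ≠ j → Function.Bijective (φ i - φ j) := by
  obtain ⟨T, hT⟩ := exists_monic_unit_differences k
  refine ⟨T, fun t ht => ?_⟩
  obtain ⟨f, hf, hdeg, hu⟩ := hT t ht
  let b : Module.Basis (Fin t) ℤ (AdjoinRoot f) :=
    (AdjoinRoot.powerBasis' hf).basis.reindex (finCongr hdeg)
  let ρ : AdjoinRoot f →+* AddMonoid.End (Fin t → G) :=
    (Module.toAddMonoidEnd (Matrix (Fin t) (Fin t) ℤ) (Fin t → G)).comp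
      (Algebra.leftMulMatrix b).toRingHom
  refine ⟨fun i => ρ (AdjoinRoot.root f ^ (i : ℕ)), fun i j hij => ?_⟩
  obtain ⟨u, hu⟩ := (hu i j hij).map ρ
  have hfun : ∀ v, (ρ (AdjoinRoot.root f ^ (i : ℕ)) - ρ (AdjoinRoot.root f ^ (j : ℕ)) :
      AddMonoid.End (Fin t → G)) v = (u : AddMonoid.End (Fin t → G)) v := by
    intro v
    rw [hu, map_sub]
  have hl : ∀ v, (↑u⁻¹ : AddMonoid.End (Fin t → G)) ((u : AddMonoid.End (Fin t → G)) v) = v :=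
    fun v => DFunLike.congr_fun u.inv_mul v
  have hr : ∀ v, (u : AddMonoid.End (Fin t → G)) ((↑u⁻¹ : AddMonoid.End (Fin t → G)) v) = v :=
    fun v => DFunLike.congr_fun u.mul_inv v
  refine Function.bijective_iff_has_inverse.2 ⟨(↑u⁻¹ : AddMonoid.End (Fin t → G)), ?_, ?_⟩
  · intro v
    exact (congrArg _ (hfun v)).trans (hl v)
  · intro v
    exact (hfun _).trans (hr v)

/-- The union of the graphs of endomorphisms `φ i` of `V` with pairwise bijective differences, times
`W`, is a `k (k - 1) |W|`-difference basis for `V × V × W` as soon as `k (k - 1) ≤ |V|`. -/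
lemma exists_basis_of_spread {V W : Type*} [AddCommGroup V] [AddCommGroup W] [Finite V] [Finite W]
    {k g : ℕ} (φ : Fin k → V →+ V) (hφ : ∀ i j, i ≠ j → Function.Bijective (φ i - φ j))
    (hV : k * (k - 1) ≤ Nat.card V) (hg : g ≤ k * (k - 1) * Nat.card W) :
    ∃ B : Set ((V × V) × W), IsDiffBasis g B ∧ Nat.card B ≤ k * (Nat.card V * Nat.card W) := by
  refine ⟨{p | ∃ i, p.1.2 = φ i p.1.1}, ?_, ?_⟩
  · rintro ⟨⟨a, b⟩, w⟩
    refine hg.trans ?_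
    by_cases h : ∃ i, b = φ i a
    · -- a point of a graph is a difference of points of that graph in `|V|` ways
      obtain ⟨i, hi⟩ := h
      refine (Nat.mul_le_mul_right _ hV).trans ?_
      rw [← Nat.card_prod]
      let F : V × W → {p : ((V × V) × W) × ((V × V) × W) //
          p.1 ∈ {p : (V × V) × W | ∃ i, p.1.2 = φ i p.1.1} ∧
          p.2 ∈ {p : (V × V) × W | ∃ i, p.1.2 = φ i p.1.1} ∧ p.1 - p.2 = ((a, b), w)} :=
        fun q => ⟨(((q.1 + a, φ i (q.1 + a)), q.2 + w), ((q.1, φ i q.1), q.2)),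
          ⟨i, rfl⟩, ⟨i, rfl⟩, by simp [hi]⟩
      refine Nat.card_le_card_of_injective F ?_
      rintro ⟨v, c⟩ ⟨v', c'⟩ h
      simp only [F, Subtype.mk.injEq, Prod.mk.injEq] at h
      exact Prod.ext h.2.1.1 h.2.2
    · push Not at h
      have hcard : Nat.card ((Finset.univ : Finset (Fin k)).offDiag × W)
          = k * (k - 1) * Nat.card W := by
        rw [Nat.card_prod, Nat.card_eq_fintype_card, Fintype.card_coe, Finset.offDiag_card,
          Finset.card_univ, Fintype.card_fin, Nat.mul_sub_one]
      rw [← hcard]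
      -- the unique representation with first term on graph `i` and second term on graph `j`
      have hex : ∀ i j, i ≠ j → ∃ v, φ i v - φ j (v - a) = b := by
        intro i j hij
        obtain ⟨v, hv⟩ := (hφ i j hij).2 (b - φ j a)
        refine ⟨v, ?_⟩
        rw [AddMonoidHom.sub_apply] at hv
        rw [map_sub, ← sub_add, hv, sub_add_cancel]
      choose! s hs using hex
      -- a point on two graphs has first coordinate zero
      have hzero : ∀ i j v, φ i v = φ j v → i ≠ j → v = 0 := by
        intro i j v hv hij
        apply (hφ i j hij).1
        rw [map_zero, AddMonoidHom.sub_apply, hv, sub_self]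
      let F : (Finset.univ : Finset (Fin k)).offDiag × W →
          {p : ((V × V) × W) × ((V × V) × W) //
          p.1 ∈ {p : (V × V) × W | ∃ i, p.1.2 = φ i p.1.1} ∧
          p.2 ∈ {p : (V × V) × W | ∃ i, p.1.2 = φ i p.1.1} ∧ p.1 - p.2 = ((a, b), w)} :=
        fun q => ⟨(((s q.1.1.1 q.1.1.2, φ q.1.1.1 (s q.1.1.1 q.1.1.2)), q.2 + w),
            ((s q.1.1.1 q.1.1.2 - a, φ q.1.1.2 (s q.1.1.1 q.1.1.2 - a)), q.2)),
          ⟨_, rfl⟩, ⟨_, rfl⟩, by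
            have := hs _ _ (Finset.mem_offDiag.1 q.1.2).2.2
            simp [-map_sub, this]⟩
      refine Nat.card_le_card_of_injective F ?_
      rintro ⟨⟨⟨i, j⟩, hij⟩, c⟩ ⟨⟨⟨i', j'⟩, hij'⟩, c'⟩ h
      simp only [F, Subtype.mk.injEq, Prod.mk.injEq] at h
      obtain ⟨⟨⟨h1, h2⟩, -⟩, ⟨h3, h4⟩, h5⟩ := h
      have hs1 := hs i j (Finset.mem_offDiag.1 hij).2.2
      rw [← h1] at h2 h4
      have hi : i = i' := by
        by_contra hne
        have h0 := hzero _ _ _ h2 hne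
        rw [h0] at hs1
        apply h j
        rw [← hs1]; simp
      have hj : j = j' := by
        by_contra hne
        have h0 := hzero _ _ _ h4 hne
        rw [h0, sub_eq_zero.1 h0] at hs1
        apply h i
        rw [← hs1]; simp
      subst hi hj h5
      rfl
  · let F : Fin k × V × W → {p : (V × V) × W | ∃ i, p.1.2 = φ i p.1.1} :=
      fun q => ⟨((q.2.1, φ q.1 q.2.1), q.2.2), ⟨q.1, rfl⟩⟩
    have hF : Function.Surjective F := by
      rintro ⟨⟨⟨v, v'⟩, w⟩, i, hi⟩
      refine ⟨(i, v, w), Subtype.ext ?_⟩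
      simp only [F]
      simp only at hi
      rw [hi]
    have := Nat.card_le_card_of_surjective F hF
    rwa [Nat.card_prod, Nat.card_prod, Nat.card_fin] at this

lemma etaMin_le_of_addEquiv {H K : Type*} [AddCommGroup H] [AddCommGroup K] [Finite H]
    (e : H ≃+ K) {g N : ℕ} {B : Set H} (hB : IsDiffBasis g B) (hN : Nat.card B ≤ N) :
    etaMin K g ≤ N := by
  refine (Nat.sInf_le ?_).trans hN
  refine ⟨e '' B, B.toFinite.image _, ?_, Nat.card_image_of_injective e.injective B⟩
  intro x
  refine (hB (e.symm x)).trans_eq (Nat.card_congr ?_)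
  refine (e.toEquiv.prodCongr e.toEquiv).subtypeEquiv ?_
  rintro ⟨p, q⟩
  simp [← map_sub, e.injective.mem_set_image, AddEquiv.eq_symm_apply]

/-- The spread construction in dimension `2 t + r`, with `V = G ^ t` and `W = G ^ r`. -/
lemma eventually_etaMin_le (G : Type*) [AddCommGroup G] [Fintype G] (hG : 1 < Fintype.card G)
    (k r : ℕ) :
    ∃ T : ℕ, ∀ t ≥ T, ∀ g ≤ k * (k - 1) * Fintype.card G ^ r,
      etaMin (Fin (t + t + r) → G) g ≤ k * (Fintype.card G ^ t * Fintype.card G ^ r) := by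
  obtain ⟨T, hT⟩ := exists_endomorphisms G k
  refine ⟨max T (k * (k - 1)), fun t ht g hg => ?_⟩
  obtain ⟨φ, hφ⟩ := hT t (le_of_max_le_left ht)
  have hc : ∀ s, Nat.card (Fin s → G) = Fintype.card G ^ s := fun s => by simp
  obtain ⟨B, hB, hBc⟩ := exists_basis_of_spread (W := Fin r → G) (g := g) φ hφ
    (by rw [hc]; exact (le_of_max_le_right ht).trans (Nat.lt_pow_self hG).le)
    (by rwa [hc])
  rw [hc, hc] at hBc
  let e2 : ((Fin t → G) × (Fin t → G)) ≃+ (Fin (t + t) → G) :=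
    ((LinearEquiv.sumArrowLequivProdArrow (Fin t) (Fin t) ℤ G).symm.trans
      (LinearEquiv.funCongrLeft ℤ G finSumFinEquiv.symm)).toAddEquiv
  let e3 : ((Fin (t + t) → G) × (Fin r → G)) ≃+ (Fin (t + t + r) → G) :=
    ((LinearEquiv.sumArrowLequivProdArrow (Fin (t + t)) (Fin r) ℤ G).symm.trans
      (LinearEquiv.funCongrLeft ℤ G finSumFinEquiv.symm)).toAddEquiv
  exact etaMin_le_of_addEquiv ((e2.prodCongr (AddEquiv.refl _)).trans e3) hB hBc

/-- The bound along the dimensions `n = 2 t + r` for a fixed `r ∈ {0, 1}`. -/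
lemma eventually_ratio_le (G : Type*) [AddCommGroup G] [Fintype G] (hG : 1 < Fintype.card G)
    {g : ℕ} (hg : 1 ≤ g) {r : ℕ} (hr : r ≤ 1) :
    ∃ T : ℕ, ∀ t ≥ T, (etaMin (Fin (t + t + r) → G) g : ℝ) /
          (Real.sqrt g * (Fintype.card G : ℝ) ^ (((t + t + r : ℕ) : ℝ) / 2))
        ≤ 1 + 2 * Real.sqrt (Fintype.card G) / Real.sqrt g := by
  set m := Fintype.card G with hm
  have hm1 : (1 : ℝ) ≤ m := by exact_mod_cast hG.le
  have hm0 : (0 : ℝ) < m := by linarith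
  set w : ℝ := Real.sqrt ((m : ℝ) ^ r) with hw
  have hwpos : 0 < w := Real.sqrt_pos.2 (by positivity)
  have hwsq : w * w = (m : ℝ) ^ r := Real.mul_self_sqrt (by positivity)
  have hwm : w ≤ Real.sqrt m := by
    apply Real.sqrt_le_sqrt
    exact (pow_le_pow_right₀ hm1 hr).trans_eq (pow_one _)
  have hg0 : (0 : ℝ) < g := by exact_mod_cast hg
  have hsg : 0 < Real.sqrt g := Real.sqrt_pos.2 hg0
  set c := ⌈Real.sqrt g / w⌉₊ with hc
  have hc1 : Real.sqrt g ≤ c * w := by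
    rw [← div_le_iff₀ hwpos]; exact Nat.le_ceil _
  have hc2 : (c : ℝ) * w ≤ Real.sqrt g + w := by
    have := (Nat.ceil_lt_add_one (a := Real.sqrt g / w) (by positivity)).le
    calc (c : ℝ) * w ≤ (Real.sqrt g / w + 1) * w := by gcongr
      _ = Real.sqrt g + w := by field_simp
  obtain ⟨T, hT⟩ := eventually_etaMin_le G hG (c + 1) r
  refine ⟨T, fun t ht => ?_⟩
  have hle : g ≤ (c + 1) * (c + 1 - 1) * m ^ r := by
    have : (g : ℝ) ≤ (c + 1) * c * (m : ℝ) ^ r := by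
      rw [← hwsq, ← Real.mul_self_sqrt hg0.le]
      calc Real.sqrt g * Real.sqrt g ≤ (c * w) * (c * w) := by gcongr
        _ = c * c * (w * w) := by ring
        _ ≤ (c + 1) * c * (w * w) := by gcongr; linarith
    rw [Nat.add_sub_cancel]
    exact_mod_cast this
  have hmain : (etaMin (Fin (t + t + r) → G) g : ℝ) ≤ (c + 1) * ((m : ℝ) ^ t * (m : ℝ) ^ r) := by
    exact_mod_cast hT t ht g hle
  have hpow : (m : ℝ) ^ (((t + t + r : ℕ) : ℝ) / 2) = (m : ℝ) ^ t * w := by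
    rw [hw, Real.sqrt_eq_rpow, ← Real.rpow_natCast, ← Real.rpow_natCast, ← Real.rpow_mul hm0.le,
      ← Real.rpow_add hm0]
    congr 1
    push_cast
    ring
  rw [hpow, div_le_iff₀ (by positivity)]
  calc (etaMin (Fin (t + t + r) → G) g : ℝ) ≤ (c + 1) * ((m : ℝ) ^ t * (m : ℝ) ^ r) := hmain
    _ = (c * w + w) * ((m : ℝ) ^ t * w) := by rw [← hwsq]; ring
    _ ≤ (Real.sqrt g + 2 * Real.sqrt m) * ((m : ℝ) ^ t * w) := by
      gcongr ?_ * _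
      linarith
    _ = (1 + 2 * Real.sqrt m / Real.sqrt g) * (Real.sqrt g * ((m : ℝ) ^ t * w)) := by
      field_simp

/-- For a finite abelian group `G` with `|G| > 1`, there is `C > 0` such that for every `g ≥ 1`,
`limsup_{n → ∞} η_g(G^n) / (√g · |G|^{n/2}) ≤ 1 + C/√g`. -/
theorem stmt3 (G : Type*) [AddCommGroup G] [Fintype G] (hG : 1 < Fintype.card G) :
    ∃ C : ℝ, 0 < C ∧ ∀ g : ℕ, 1 ≤ g →
      Filter.limsup (fun n : ℕ => (etaMin (Fin n → G) g : ℝ) /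
          (Real.sqrt g * (Fintype.card G : ℝ) ^ ((n : ℝ) / 2))) Filter.atTop
        ≤ 1 + C / Real.sqrt g := by
  refine ⟨2 * Real.sqrt (Fintype.card G), ?_, fun g hg => ?_⟩
  · have : (0 : ℝ) < Fintype.card G := by exact_mod_cast (by omega : 0 < Fintype.card G)
    positivity
  · obtain ⟨T₀, h₀⟩ := eventually_ratio_le G hG hg (r := 0) (by norm_num)
    obtain ⟨T₁, h₁⟩ := eventually_ratio_le G hG hg (r := 1) le_rfl
    refine Filter.limsup_le_of_le ?_ ?_
    · -- a real `limsup` is bounded by an eventual upper bound only for a sequence that does not tend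
      -- to `-∞`; here the terms are nonnegative
      refine Filter.IsBoundedUnder.isCoboundedUnder_le ⟨0, ?_⟩
      simp only [Filter.eventually_map]
      exact Filter.Eventually.of_forall fun n => by positivity
    · filter_upwards [Filter.eventually_ge_atTop (2 * (T₀ + T₁) + 1)] with n hn
      rcases Nat.even_or_odd' n with ⟨t, ht | ht⟩
      · have h := h₀ t (by omega)
        rwa [show t + t + 0 = n by omega] at h
      · have h := h₁ t (by omega)
        rwa [show t + t + 1 = n by omega] at h
end

section
/- Let G be a finite abelian group with |G| > 1. Then lim_{g → ∞} limsup_{n → ∞} η_g(G^n) / (√g · |G|^{n/2}) = 1 and lim_{g → ∞} liminf_{n → ∞} η_g(G^n) / (√g · |G|^{n/2}) = 1, where G^n denotes the direct product of n copies of G. -/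
/-!
Counting pairs gives `|B| ^ 2 ≥ g |G| ^ n` for every `g`-difference basis `B` of `G ^ n`, so the
ratio is at least `1` as soon as such a basis exists (`mul_card_le_etaMin`).

For the upper bound, let `V` be a finite module over a commutative ring containing `r₁, …, r_k`
whose pairwise differences are units. The "lines" `{(v, rᵢ v)}` are pairwise complementary subgroups
of `V × V`, hence every element has a representation `b₁ - b₂` with `b₁` on line `i` and `b₂` on
line `j`, for each `i ≠ j`. Their union is a `k (k - 1)`-difference basis with at most `k |V|`
elements (`isDiffBasis_lines`), which is optimal up to the factor `√(k / (k - 1))`.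
To realise `G ^ m` as such a `V` for every large `m`, take `V = ℤ[X]/(f) ⊗ G` with
`f = X ^ (s + 1) (X - 1) (X ^ 2 - 1) ⋯ (X ^ k - 1) + 1` monic of degree `m`. Modulo `f` the elements
`X` and `X ^ d - 1` for `1 ≤ d ≤ k` are units, hence so are the differences of the powers
`1, X, …, X ^ (k - 1)` (`exists_monic_isUnit_sub`).

Odd exponents are reached by adding one full factor `G`, which is a `|G|`-difference basis of itself
(`IsDiffBasis.prod_univ`). With `k ≈ √g` for even `n` and `k ≈ √(g / |G|)` for odd `n`, the ratio is
at most `1 + 2 √(|G| / g)` for all large `n` (`eventually_eta_ratio_bounds`).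
-/

open Filter Topology

/-! ### Powers with unit differences -/

/-- Over `ℤ`, in every large degree `m` there is a monic `f` such that the first `k` powers of the
root of `f` have pairwise differences that are units. Indeed, with
`f = X ^ (s + 1) * ∏_{d ≤ k} (X ^ d - 1) + 1`, the root and all `X ^ d - 1` divide `-1` modulo `f`. -/
lemma exists_monic_isUnit_sub (k : ℕ) : ∃ m₀ : ℕ, ∀ m ≥ m₀, ∃ f : Polynomial ℤ,
    f.Monic ∧ f.natDegree = m ∧ ∀ i j : Fin k, i ≠ j →
      IsUnit (AdjoinRoot.root f ^ (i : ℕ) - AdjoinRoot.root f ^ (j : ℕ)) := by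
  set P : Polynomial ℤ := ∏ d ∈ Finset.range k, (Polynomial.X ^ (d + 1) - 1) with hP
  have hPm : P.Monic := by
    refine Polynomial.monic_prod_of_monic _ _ fun d _ => ?_
    simpa using Polynomial.monic_X_pow_sub_C (1 : ℤ) (Nat.succ_ne_zero d)
  refine ⟨P.natDegree + 1, fun m hm => ?_⟩
  obtain ⟨s, rfl⟩ := Nat.exists_eq_add_of_le hm
  set Q : Polynomial ℤ := Polynomial.X ^ (s + 1) * P with hQ
  have hQm : Q.Monic := (Polynomial.monic_X_pow _).mul hPm
  have hQd : Q.natDegree = P.natDegree + 1 + s := by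
    rw [hQ, (Polynomial.monic_X_pow _).natDegree_mul hPm, Polynomial.natDegree_X_pow]; ring
  have hlt : (1 : Polynomial ℤ).natDegree < Q.natDegree := by
    rw [hQd, Polynomial.natDegree_one]; omega
  refine ⟨Q + 1, hQm.add_of_left (Polynomial.degree_lt_degree hlt), ?_, ?_⟩
  · rw [Polynomial.natDegree_add_eq_left_of_natDegree_lt hlt, hQd]
  set x := AdjoinRoot.root (Q + 1) with hx
  have h0 : x ^ (s + 1) * ∏ d ∈ Finset.range k, (x ^ (d + 1) - 1) + 1 = 0 := by
    have h : AdjoinRoot.mk (Q + 1) (Q + 1) = 0 := AdjoinRoot.mk_self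
    rw [← h]
    simp [hQ, hP, hx, map_prod]
  have hu : IsUnit (x ^ (s + 1) * ∏ d ∈ Finset.range k, (x ^ (d + 1) - 1)) := by
    rw [eq_neg_of_add_eq_zero_left h0]
    exact isUnit_one.neg
  have hxu : IsUnit x :=
    isUnit_of_dvd_unit (dvd_mul_of_dvd_left (dvd_pow_self x (Nat.succ_ne_zero s)) _) hu
  have hdu : ∀ d ∈ Finset.range k, IsUnit (x ^ (d + 1) - 1) := fun d hd =>
    isUnit_of_dvd_unit (dvd_mul_of_dvd_right (Finset.dvd_prod_of_mem _ hd) _) hu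
  have key : ∀ i j : Fin k, i < j → IsUnit (x ^ (j : ℕ) - x ^ (i : ℕ)) := by
    intro i j hij
    have hij' : (i : ℕ) < j := hij
    obtain ⟨d, hd⟩ := Nat.exists_eq_add_of_lt hij'
    have : x ^ (j : ℕ) - x ^ (i : ℕ) = x ^ (i : ℕ) * (x ^ (d + 1) - 1) := by
      rw [hd]; ring
    rw [this]
    exact (hxu.pow _).mul (hdu d (Finset.mem_range.2 (by have := j.2; omega)))
  intro i j hij
  rcases lt_or_gt_of_ne hij with h | h
  · rw [← neg_sub]; exact (key i j h).neg
  · exact key j i h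

/-! ### Unions of lines -/

/-- The union of the `k` "lines" `{(v, r i • v)}` in `V × V`. If all `r i - r j` are units, two
different lines are complementary subgroups, so a point off the lines is a difference of a point of
line `i` and a point of line `j` in exactly one way for each `i ≠ j`, while a point of a line is a
difference of two points of that line in `|V|` ways. -/
lemma isDiffBasis_lines {R V : Type*} [CommRing R] [AddCommGroup V] [Module R V] [Finite V]
    {k : ℕ} (r : Fin k → R) (hr : ∀ i j, i ≠ j → IsUnit (r i - r j))
    (hV : k * (k - 1) ≤ Nat.card V) :
    IsDiffBasis (k * (k - 1)) {p : V × V | ∃ i, p.2 = r i • p.1} := by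
  intro x
  by_cases hx : ∃ i, x.2 = r i • x.1
  · obtain ⟨i, hi⟩ := hx
    refine hV.trans (Nat.card_le_card_of_injective
      (fun w : V => ⟨(x + (w, r i • w), (w, r i • w)), ⟨i, ?_⟩, ⟨i, rfl⟩, ?_⟩) ?_)
    · simp [hi, smul_add]
    · simp
    · intro w w' h
      simpa using congrArg (fun p => p.1.2.1) h
  · push Not at hx
    have hc : Nat.card {p : Fin k × Fin k // p.1 ≠ p.2} = k * (k - 1) := by
      have h := Finset.offDiag_card (Finset.univ : Finset (Fin k))
      rw [Finset.card_univ, Fintype.card_fin] at h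
      rw [Nat.card_eq_fintype_card, Fintype.card_subtype, Nat.mul_sub, mul_one, ← h]
      congr 1
      ext p
      simp
    rw [← hc]
    -- solve `(r i - r j) • v = x.2 - r j • x.1`, so that `(v, r i v) - (v - x.1, r j (v - x.1)) = x`
    have hs : ∀ p : {p : Fin k × Fin k // p.1 ≠ p.2}, ∃ v : V,
        r p.1.1 • v - r p.1.2 • (v - x.1) = x.2 := by
      rintro ⟨⟨i, j⟩, hij⟩
      obtain ⟨u, hu⟩ := hr i j hij
      refine ⟨(u⁻¹ : Rˣ) • (x.2 - r j • x.1), ?_⟩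
      set v := (u⁻¹ : Rˣ) • (x.2 - r j • x.1) with hv
      have : (r i - r j) • v = x.2 - r j • x.1 := by
        rw [← hu, hv, ← Units.smul_def, smul_inv_smul]
      rw [sub_smul] at this
      rw [smul_sub]
      have h2 : x.2 = (r i • v - r j • v) + r j • x.1 := by rw [this]; abel
      rw [h2]; abel
    choose v hv using hs
    -- two lines meet only at the origin
    have hz : ∀ i j (w : V), i ≠ j → r i • w = r j • w → w = 0 := by
      intro i j w hij h
      obtain ⟨u, hu⟩ := hr i j hij
      have : u • w = 0 := by rw [Units.smul_def, hu, sub_smul, h, sub_self]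
      exact (smul_eq_zero_iff_eq u).1 this
    refine Nat.card_le_card_of_injective (fun p =>
      ⟨((v p, r p.1.1 • v p), (v p - x.1, r p.1.2 • (v p - x.1))), ⟨_, rfl⟩, ⟨_, rfl⟩, ?_⟩) ?_
    · exact Prod.ext (by simp) (hv p)
    · intro p q h
      have h1 := congrArg (fun t => t.1.1.1) h
      have h2 := congrArg (fun t => t.1.1.2) h
      have h3 := congrArg (fun t => t.1.2.2) h
      simp only at h1 h2 h3
      rw [← h1] at h2 h3
      apply Subtype.ext
      apply Prod.ext
      · by_contra hne
        have h0 := hz _ _ _ hne h2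
        refine hx p.1.2 ?_
        have := hv p
        rw [h0] at this
        rw [← this]; simp
      · by_contra hne
        have h0 := sub_eq_zero.1 (hz _ _ _ hne h3)
        refine hx p.1.1 ?_
        have := hv p
        rw [h0] at this
        rw [← this]; simp

lemma card_lines_le {R V : Type*} [CommRing R] [AddCommGroup V] [Module R V] [Finite V]
    {k : ℕ} (r : Fin k → R) :
    Nat.card {p : V × V | ∃ i, p.2 = r i • p.1} ≤ k * Nat.card V := by
  have h : Nat.card (Fin k × V) = k * Nat.card V := by simp
  rw [← h]
  refine Nat.card_le_card_of_surjective
    (fun q : Fin k × V => (⟨(q.2, r q.1 • q.2), q.1, rfl⟩ : {p : V × V | ∃ i, p.2 = r i • p.1})) ?_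
  rintro ⟨⟨a, b⟩, i, hi⟩
  exact ⟨(i, a), Subtype.ext (Prod.ext rfl hi.symm)⟩

/-! ### Transport and products of difference bases -/

lemma IsDiffBasis.mono {H : Type*} [AddCommGroup H] {g g' : ℕ} (h : g ≤ g') {B : Set H}
    (hB : IsDiffBasis g' B) : IsDiffBasis g B := fun x => h.trans (hB x)

lemma IsDiffBasis.preimage {H K : Type*} [AddCommGroup H] [AddCommGroup K] [Finite H] (e : H ≃+ K)
    {g : ℕ} {B : Set K} (hB : IsDiffBasis g B) : IsDiffBasis g (e ⁻¹' B) := by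
  intro x
  refine (hB (e x)).trans (Nat.card_le_card_of_injective
    (fun p => ⟨(e.symm p.1.1, e.symm p.1.2), by simpa using p.2.1, by simpa using p.2.2.1, ?_⟩) ?_)
  · rw [← map_sub, p.2.2.2, e.symm_apply_apply]
  · intro p q h
    have := congrArg Subtype.val h
    simp only [Prod.mk.injEq, EmbeddingLike.apply_eq_iff_eq] at this
    exact Subtype.ext (Prod.ext this.1 this.2)

/-- Multiplying by a full factor `K` is lossless: `K` itself is a `|K|`-difference basis of `K`. -/
lemma IsDiffBasis.prod_univ {H K : Type*} [AddCommGroup H] [AddCommGroup K] [Finite H] [Finite K]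
    {g : ℕ} {B : Set H} (hB : IsDiffBasis g B) :
    IsDiffBasis (g * Nat.card K) (B ×ˢ (Set.univ : Set K)) := by
  intro x
  refine (Nat.mul_le_mul_right _ (hB x.1)).trans ?_
  rw [← Nat.card_prod]
  refine Nat.card_le_card_of_injective
    (fun p => ⟨((p.1.1.1, x.2 + p.2), (p.1.1.2, p.2)), ⟨p.1.2.1, trivial⟩, ⟨p.1.2.2.1, trivial⟩,
      Prod.ext p.1.2.2.2 (by simp)⟩) ?_
  intro p q h
  have := congrArg Subtype.val h
  simp only [Prod.mk.injEq] at this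
  exact Prod.ext (Subtype.ext (Prod.ext this.1.1 this.2.1)) this.2.2

/-! ### Difference bases of powers of a group -/

/-- Near-perfect difference bases of `G ^ m × G ^ m`: for `f` as in `exists_monic_isUnit_sub`, the
group `ℤ[X]/(f) ⊗ G ≃ G ^ m` is a module over `ℤ[X]/(f)`, in which lines can be drawn. -/
lemma exists_basis_prod (G : Type*) [AddCommGroup G] [Fintype G] (hG : 1 < Fintype.card G) (k : ℕ) :
    ∃ m₀ : ℕ, ∀ m ≥ m₀, ∃ B : Set ((Fin m → G) × (Fin m → G)),
      IsDiffBasis (k * (k - 1)) B ∧ Nat.card B ≤ k * Fintype.card G ^ m := by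
  obtain ⟨m₀, h⟩ := exists_monic_isUnit_sub k
  refine ⟨max m₀ (k * (k - 1)), fun m hm => ?_⟩
  obtain ⟨f, hf, hd, hu⟩ := h m (le_trans (le_max_left _ _) hm)
  let b : Module.Basis (Fin m) ℤ (AdjoinRoot f) :=
    (AdjoinRoot.powerBasis' hf).basis.reindex (finCongr (by simpa using hd))
  let e : (Fin m → G) ≃+ TensorProduct ℤ (AdjoinRoot f) G :=
    ((TensorProduct.equivFinsuppOfBasisLeft b).trans
      (Finsupp.linearEquivFunOnFinite ℤ G (Fin m))).symm.toAddEquiv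
  have : Finite (TensorProduct ℤ (AdjoinRoot f) G) := Finite.of_equiv _ e.toEquiv
  have hc : Nat.card (TensorProduct ℤ (AdjoinRoot f) G) = Fintype.card G ^ m := by
    rw [← Nat.card_congr e.toEquiv]; simp
  have hk : k * (k - 1) ≤ Nat.card (TensorProduct ℤ (AdjoinRoot f) G) := by
    rw [hc]
    exact ((le_max_right _ _).trans hm).trans (Nat.lt_pow_self hG).le
  refine ⟨_, (isDiffBasis_lines _ hu hk).preimage (e.prodCongr e), ?_⟩
  rw [← hc]
  refine le_trans (le_of_eq ?_)
    (card_lines_le (V := TensorProduct ℤ (AdjoinRoot f) G)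
      fun i : Fin k => AdjoinRoot.root f ^ (i : ℕ))
  exact Nat.card_congr ((e.prodCongr e).toEquiv.subtypeEquiv fun a => Iff.rfl)

/-- The same with `r` additional full factors `G`; `r = 0` and `r = 1` reach both parities of the
exponent. -/
lemma exists_basis (G : Type*) [AddCommGroup G] [Fintype G] (hG : 1 < Fintype.card G) (k r : ℕ) :
    ∃ m₀ : ℕ, ∀ m ≥ m₀, ∃ B : Set (Fin (m + m + r) → G),
      IsDiffBasis (k * (k - 1) * Fintype.card G ^ r) B ∧
        Nat.card B ≤ k * Fintype.card G ^ m * Fintype.card G ^ r := by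
  obtain ⟨m₀, h⟩ := exists_basis_prod G hG k
  refine ⟨m₀, fun m hm => ?_⟩
  obtain ⟨B, hB, hc⟩ := h m hm
  let e : (Fin (m + m + r) → G) ≃+ ((Fin m → G) × (Fin m → G)) × (Fin r → G) :=
    { toEquiv := ((Fin.appendEquiv (m + m) r).symm.trans
        ((Fin.appendEquiv m m).symm.prodCongr (Equiv.refl _)))
      map_add' := fun _ _ => rfl }
  have hr : Nat.card (Fin r → G) = Fintype.card G ^ r := by simp
  refine ⟨e ⁻¹' (B ×ˢ Set.univ), ?_, ?_⟩
  · rw [← hr]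
    exact hB.prod_univ.preimage e
  · have : Nat.card (e ⁻¹' (B ×ˢ (Set.univ : Set (Fin r → G)))) =
        Nat.card (B ×ˢ (Set.univ : Set (Fin r → G)) : Set _) :=
      Nat.card_congr (e.toEquiv.subtypeEquiv fun a => Iff.rfl)
    rw [this, Nat.card_congr (Equiv.Set.prod _ _), Nat.card_prod, ← hr]
    refine Nat.mul_le_mul hc (le_of_eq ?_)
    exact Nat.card_congr (Equiv.Set.univ _)

/-! ### Bounds for the minimum size -/

/-- Double counting pairs: each of the `|H|` elements uses at least `g` of the `|B| ^ 2` pairs. -/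
lemma IsDiffBasis.mul_card_le {H : Type*} [AddCommGroup H] [Finite H] {g : ℕ} {B : Set H}
    (hB : IsDiffBasis g B) : g * Nat.card H ≤ Nat.card B ^ 2 := by
  have := Fintype.ofFinite H
  have h1 : Nat.card (Σ x : H, {p : H × H // p.1 ∈ B ∧ p.2 ∈ B ∧ p.1 - p.2 = x}) ≤
      Nat.card (B × B) := by
    refine Nat.card_le_card_of_injective (fun s => (⟨s.2.1.1, s.2.2.1⟩, ⟨s.2.1.2, s.2.2.2.1⟩)) ?_
    rintro ⟨x, p, h1, h2, rfl⟩ ⟨y, q, h3, h4, rfl⟩ h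
    simp only [Prod.mk.injEq, Subtype.mk.injEq] at h
    obtain rfl : p = q := Prod.ext h.1 h.2
    rfl
  rw [Nat.card_sigma, Nat.card_prod, ← pow_two] at h1
  refine le_trans ?_ h1
  calc g * Nat.card H = ∑ _x : H, g := by simp [mul_comm]
    _ ≤ _ := Finset.sum_le_sum fun x _ => hB x

lemma etaMin_le {H : Type*} [AddCommGroup H] [Finite H] {g : ℕ} {B : Set H}
    (hB : IsDiffBasis g B) : etaMin H g ≤ Nat.card B :=
  Nat.sInf_le ⟨B, B.toFinite, hB, rfl⟩

/-- The existence of some `g`-difference basis is needed here: otherwise `etaMin H g` is the junk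
value `sInf ∅ = 0`. -/
lemma mul_card_le_etaMin {H : Type*} [AddCommGroup H] [Finite H] {g : ℕ} {B : Set H}
    (hB : IsDiffBasis g B) : g * Nat.card H ≤ etaMin H g ^ 2 := by
  obtain ⟨B', -, hB', hc⟩ := Nat.sInf_mem
    (s := {k : ℕ | ∃ B : Set H, B.Finite ∧ IsDiffBasis g B ∧ Nat.card B = k})
    ⟨_, B, B.toFinite, hB, rfl⟩
  have h := hB'.mul_card_le
  rwa [hc] at h

lemma eta_ratio_bounds_of_mod (G : Type*) [AddCommGroup G] [Fintype G] (hG : 1 < Fintype.card G)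
    {g : ℕ} (hg : 0 < g) {r : ℕ} (hr : r < 2) :
    ∃ m₀ : ℕ, ∀ m ≥ m₀,
      1 ≤ (etaMin (Fin (m + m + r) → G) g : ℝ) /
          (Real.sqrt g * (Fintype.card G : ℝ) ^ (((m + m + r : ℕ) : ℝ) / 2)) ∧
      (etaMin (Fin (m + m + r) → G) g : ℝ) /
          (Real.sqrt g * (Fintype.card G : ℝ) ^ (((m + m + r : ℕ) : ℝ) / 2)) ≤
        1 + 2 * Real.sqrt (Fintype.card G) / Real.sqrt g := by
  set q : ℝ := (Fintype.card G : ℝ) with hq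
  have hq1 : 1 < q := by rw [hq]; exact_mod_cast hG
  set c : ℝ := q ^ r with hc
  have hc0 : 0 < c := by positivity
  have hcq : c ≤ q := by
    rw [hc]; simpa using pow_le_pow_right₀ hq1.le (Nat.lt_succ_iff.1 hr)
  have hg0 : (0 : ℝ) < g := by exact_mod_cast hg
  -- the least `t` with `t ^ 2 ≥ g / c` makes `c * (t + 1) * t ≥ g`
  set t : ℕ := ⌈Real.sqrt (g / c)⌉₊ with ht
  have ht1 : Real.sqrt (g / c) ≤ t := Nat.le_ceil _
  have ht2 : (t : ℝ) < Real.sqrt (g / c) + 1 := Nat.ceil_lt_add_one (Real.sqrt_nonneg _)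
  obtain ⟨m₀, h⟩ := exists_basis G hG (t + 1) r
  refine ⟨m₀, fun m hm => ?_⟩
  obtain ⟨B, hB, hcard⟩ := h m hm
  have hgle : g ≤ (t + 1) * (t + 1 - 1) * Fintype.card G ^ r := by
    have h1 : (g : ℝ) ≤ (t + 1) * t * c := by
      have h2 : (g : ℝ) / c ≤ t ^ 2 := by
        rw [← Real.sq_sqrt (by positivity : (0 : ℝ) ≤ g / c)]; gcongr
      rw [div_le_iff₀ hc0] at h2
      nlinarith [(Nat.cast_nonneg t : (0 : ℝ) ≤ t)]
    rw [hc, hq] at h1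
    rw [Nat.add_sub_cancel]
    exact_mod_cast h1
  have hB' := hB.mono hgle
  have hup : (etaMin (Fin (m + m + r) → G) g : ℝ) ≤ (t + 1) * q ^ m * c := by
    rw [hc, hq]; exact_mod_cast (etaMin_le hB').trans hcard
  have hlow : (g : ℝ) * q ^ (m + m + r) ≤ (etaMin (Fin (m + m + r) → G) g : ℝ) ^ 2 := by
    have := mul_card_le_etaMin hB'
    rw [Nat.card_eq_fintype_card, Fintype.card_fun, Fintype.card_fin] at this
    rw [hq]; exact_mod_cast this
  have hpow : q ^ (((m + m + r : ℕ) : ℝ) / 2) = q ^ m * Real.sqrt c := by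
    rw [Real.rpow_div_two_eq_sqrt _ (by positivity), Real.rpow_natCast, pow_add, ← two_mul, pow_mul,
      Real.sq_sqrt (by positivity), hc, Real.sqrt_eq_rpow, Real.sqrt_eq_rpow,
      ← Real.rpow_natCast, ← Real.rpow_natCast, ← Real.rpow_natCast, ← Real.rpow_mul (by positivity),
      ← Real.rpow_mul (by positivity), mul_comm (1 / 2 : ℝ)]
  have hsg : 0 < Real.sqrt g := Real.sqrt_pos.2 hg0
  have hsc : 0 < Real.sqrt c := Real.sqrt_pos.2 hc0
  have hqm : 0 < q ^ m := by positivity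
  rw [hpow]
  constructor
  · rw [one_le_div (by positivity)]
    refine le_of_sq_le_sq ?_ (Nat.cast_nonneg _)
    refine le_trans (le_of_eq ?_) hlow
    rw [mul_pow, mul_pow, Real.sq_sqrt hg0.le, Real.sq_sqrt hc0.le, hc]; ring
  · rw [div_le_iff₀ (by positivity)]
    refine hup.trans ?_
    have h3 : (t + 1) * Real.sqrt c ≤ Real.sqrt g + 2 * Real.sqrt q := by
      have h4 : Real.sqrt (g / c) * Real.sqrt c = Real.sqrt g := by
        rw [← Real.sqrt_mul (by positivity), div_mul_cancel₀ _ hc0.ne']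
      have h5 : Real.sqrt c ≤ Real.sqrt q := Real.sqrt_le_sqrt hcq
      nlinarith
    have h6 : (1 + 2 * Real.sqrt q / Real.sqrt g) * (Real.sqrt g * (q ^ m * Real.sqrt c)) =
        (Real.sqrt g + 2 * Real.sqrt q) * (q ^ m * Real.sqrt c) := by
      field_simp
    rw [h6]
    calc (t + 1) * q ^ m * c = ((t + 1) * Real.sqrt c) * (q ^ m * Real.sqrt c) := by
          nth_rewrite 1 [← Real.mul_self_sqrt hc0.le]; ring
      _ ≤ _ := by gcongr

lemma eventually_eta_ratio_bounds (G : Type*) [AddCommGroup G] [Fintype G]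
    (hG : 1 < Fintype.card G) {g : ℕ} (hg : 0 < g) :
    ∀ᶠ n : ℕ in atTop,
      1 ≤ (etaMin (Fin n → G) g : ℝ) /
          (Real.sqrt g * (Fintype.card G : ℝ) ^ ((n : ℝ) / 2)) ∧
      (etaMin (Fin n → G) g : ℝ) /
          (Real.sqrt g * (Fintype.card G : ℝ) ^ ((n : ℝ) / 2)) ≤
        1 + 2 * Real.sqrt (Fintype.card G) / Real.sqrt g := by
  obtain ⟨m₀, h₀⟩ := eta_ratio_bounds_of_mod G hG hg (r := 0) (by norm_num)
  obtain ⟨m₁, h₁⟩ := eta_ratio_bounds_of_mod G hG hg (r := 1) (by norm_num)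
  filter_upwards [eventually_ge_atTop (2 * (m₀ + m₁))] with n hn
  rcases Nat.even_or_odd' n with ⟨m, hm | hm⟩
  · obtain rfl : n = m + m + 0 := by omega
    exact h₀ m (by omega)
  · obtain rfl : n = m + m + 1 := by omega
    exact h₁ m (by omega)


/-- For a finite abelian group `G` with `|G| > 1`,
`lim_{g → ∞} limsup_{n → ∞} η_g(G^n) / (√g · |G|^{n/2}) = 1` and
`lim_{g → ∞} liminf_{n → ∞} η_g(G^n) / (√g · |G|^{n/2}) = 1`. -/
theorem stmt4 (G : Type*) [AddCommGroup G] [Fintype G] (hG : 1 < Fintype.card G) :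
    Filter.Tendsto (fun g : ℕ =>
        Filter.limsup (fun n : ℕ => (etaMin (Fin n → G) g : ℝ) /
          (Real.sqrt g * (Fintype.card G : ℝ) ^ ((n : ℝ) / 2))) Filter.atTop)
      Filter.atTop (nhds 1) ∧
    Filter.Tendsto (fun g : ℕ =>
        Filter.liminf (fun n : ℕ => (etaMin (Fin n → G) g : ℝ) /
          (Real.sqrt g * (Fintype.card G : ℝ) ^ ((n : ℝ) / 2))) Filter.atTop)
      Filter.atTop (nhds 1) := by
  have hev : ∀ᶠ g : ℕ in atTop, 0 < g := eventually_gt_atTop 0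
  have hlim : Tendsto (fun g : ℕ => 1 + 2 * Real.sqrt (Fintype.card G) / Real.sqrt g) atTop
      (nhds 1) := by
    have h : Tendsto (fun g : ℕ => Real.sqrt (g : ℝ)) atTop atTop :=
      Real.tendsto_sqrt_atTop.comp tendsto_natCast_atTop_atTop
    simpa using (h.const_div_atTop (2 * Real.sqrt (Fintype.card G))).const_add 1
  have hb : ∀ g : ℕ, 0 < g →
      1 ≤ liminf (fun n : ℕ => (etaMin (Fin n → G) g : ℝ) /
          (Real.sqrt g * (Fintype.card G : ℝ) ^ ((n : ℝ) / 2))) atTop ∧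
      liminf (fun n : ℕ => (etaMin (Fin n → G) g : ℝ) /
          (Real.sqrt g * (Fintype.card G : ℝ) ^ ((n : ℝ) / 2))) atTop ≤
        limsup (fun n : ℕ => (etaMin (Fin n → G) g : ℝ) /
          (Real.sqrt g * (Fintype.card G : ℝ) ^ ((n : ℝ) / 2))) atTop ∧
      limsup (fun n : ℕ => (etaMin (Fin n → G) g : ℝ) /
          (Real.sqrt g * (Fintype.card G : ℝ) ^ ((n : ℝ) / 2))) atTop ≤
        1 + 2 * Real.sqrt (Fintype.card G) / Real.sqrt g := by
    intro g hg
    have h := eventually_eta_ratio_bounds G hG hg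
    have hl := isBoundedUnder_of_eventually_ge (h.mono fun _ h => h.1)
    have hu := isBoundedUnder_of_eventually_le (h.mono fun _ h => h.2)
    exact ⟨le_liminf_of_le hu.isCoboundedUnder_ge (h.mono fun _ h => h.1),
      liminf_le_limsup hu hl,
      limsup_le_of_le hl.isCoboundedUnder_le (h.mono fun _ h => h.2)⟩
  constructor
  · exact tendsto_of_tendsto_of_tendsto_of_le_of_le' tendsto_const_nhds hlim
      (hev.mono fun g hg => (hb g hg).1.trans (hb g hg).2.1) (hev.mono fun g hg => (hb g hg).2.2)
  · exact tendsto_of_tendsto_of_tendsto_of_le_of_le' tendsto_const_nhds hlim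
      (hev.mono fun g hg => (hb g hg).1) (hev.mono fun g hg => (hb g hg).2.1.trans (hb g hg).2.2)
end

section
/- Let g₁ and g₂ be positive integers, let G be an abelian group, and let H be a subgroup of G. Suppose {a₁, …, a_s} ⊆ H is a g₁-additive basis of H and {b₁ + H, …, b_t + H} is a g₂-additive basis of the quotient group G/H. Then the set {a_k + b_i : 1 ≤ k ≤ s, 1 ≤ i ≤ t} is a g₁g₂-additive basis of G. Consequently, if G is finite, then ν_{g₁g₂}(G) ≤ ν_{g₁}(H) · ν_{g₂}(G/H). -/
/-! Fix `x : G`. Each representation `x + H = β + γ` by cosets from the basis of `G ⧸ H` lifts to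
`b, c ∈ B` with `x - (b + c) ∈ H`, and that element of `H` has at least `g₁` representations
`a₁ + a₂` over `A`, each of which gives `x = (a₁ + b) + (a₂ + c)`. All these representations of `x`
are different: reducing mod `H` recovers `(β, γ)`, hence `(b, c)`, and then `(a₁, a₂)`. This is
`isAddBasis_add`. The inequality for `ν` follows by applying it to minimum bases of `H` and
`G ⧸ H`, the latter lifted to coset representatives, since the resulting set is the image of a
product. -/

/-- `A` is a `g`-additive basis for the additive group `G`: every `x ∈ G` has at least `g`
representations `x = a₁ + a₂` with ordered pairs `(a₁, a₂) ∈ A × A`. -/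
def IsAddBasis {G : Type*} [AddCommGroup G] (g : ℕ) (A : Set G) : Prop :=
  ∀ x : G, g ≤ Nat.card {p : G × G // p.1 ∈ A ∧ p.2 ∈ A ∧ p.1 + p.2 = x}

/-- `ν_g(G)`: the minimum size of a `g`-additive basis for `G`. -/
noncomputable def nuMin (G : Type*) [AddCommGroup G] (g : ℕ) : ℕ :=
  sInf {k : ℕ | ∃ A : Set G, A.Finite ∧ IsAddBasis g A ∧ Nat.card A = k}

theorem finite_reps {G : Type*} [AddCommGroup G] {A : Set G} (hA : A.Finite) (x : G) :
    Finite {p : G × G // p.1 ∈ A ∧ p.2 ∈ A ∧ p.1 + p.2 = x} :=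
  ((hA.prod hA).subset fun _ hp => ⟨hp.1, hp.2.1⟩ :
    {p : G × G | p.1 ∈ A ∧ p.2 ∈ A ∧ p.1 + p.2 = x}.Finite).to_subtype

theorem finite_addSet {G : Type*} [AddCommGroup G] {H : AddSubgroup G} {A : Set H} {B : Set G}
    (hA : A.Finite) (hB : B.Finite) : {x : G | ∃ a ∈ A, ∃ b ∈ B, x = (a : G) + b}.Finite := by
  refine ((hA.prod hB).image fun p : H × G => (p.1 : G) + p.2).subset ?_
  rintro _ ⟨a, ha, b, hb, rfl⟩
  exact ⟨(a, b), ⟨ha, hb⟩, rfl⟩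

/-- The quotient construction. One chosen lift `s q ∈ B` of each coset `q` in the image of `B`
already produces enough representations. -/
theorem isAddBasis_add {G : Type*} [AddCommGroup G] {g₁ g₂ : ℕ}
    {H : AddSubgroup G} {A : Set H} (hAfin : A.Finite) (hA : IsAddBasis g₁ A)
    {B : Set G} (hBfin : B.Finite)
    (hB : IsAddBasis g₂ ((fun x : G => (QuotientAddGroup.mk x : G ⧸ H)) '' B)) :
    IsAddBasis (g₁ * g₂) {x : G | ∃ a ∈ A, ∃ b ∈ B, x = (a : G) + b} := by
  intro x
  have hs : ∀ q : G ⧸ H, ∃ b : G,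
      q ∈ (fun x : G => (QuotientAddGroup.mk x : G ⧸ H)) '' B →
        b ∈ B ∧ (QuotientAddGroup.mk b : G ⧸ H) = q := by
    intro q
    by_cases hq : q ∈ (fun x : G => (QuotientAddGroup.mk x : G ⧸ H)) '' B
    · obtain ⟨b, hb, h⟩ := hq
      exact ⟨b, fun _ => ⟨hb, h⟩⟩
    · exact ⟨0, fun h => absurd h hq⟩
  choose s hs using hs
  let Q := {p : (G ⧸ H) × (G ⧸ H) // p.1 ∈ (fun x : G => (QuotientAddGroup.mk x : G ⧸ H)) '' B ∧
    p.2 ∈ (fun x : G => (QuotientAddGroup.mk x : G ⧸ H)) '' B ∧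
    p.1 + p.2 = (QuotientAddGroup.mk x : G ⧸ H)}
  have hQ : Finite Q := finite_reps (hBfin.image _) _
  have : Fintype Q := Fintype.ofFinite Q
  have hmem : ∀ q : Q, x - (s q.1.1 + s q.1.2) ∈ H := by
    intro q
    rw [← QuotientAddGroup.eq_zero_iff, QuotientAddGroup.mk_sub, QuotientAddGroup.mk_add,
      (hs _ q.2.1).2, (hs _ q.2.2.1).2, q.2.2.2, sub_self]
  let R : Q → Type _ := fun q =>
    {p : H × H // p.1 ∈ A ∧ p.2 ∈ A ∧ p.1 + p.2 = ⟨x - (s q.1.1 + s q.1.2), hmem q⟩}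
  have hR : ∀ q, Finite (R q) := fun q => finite_reps hAfin _
  have hT := finite_reps (finite_addSet hAfin hBfin) x
  let f : (Σ q, R q) → {p : G × G // p.1 ∈ {x : G | ∃ a ∈ A, ∃ b ∈ B, x = (a : G) + b} ∧
      p.2 ∈ {x : G | ∃ a ∈ A, ∃ b ∈ B, x = (a : G) + b} ∧ p.1 + p.2 = x} := fun r =>
    ⟨((r.2.1.1 : G) + s r.1.1.1, (r.2.1.2 : G) + s r.1.1.2),
      ⟨_, r.2.2.1, _, (hs _ r.1.2.1).1, rfl⟩, ⟨_, r.2.2.2.1, _, (hs _ r.1.2.2.1).1, rfl⟩, by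
        have h : (r.2.1.1 : G) + (r.2.1.2 : G) = x - (s r.1.1.1 + s r.1.1.2) :=
          congrArg Subtype.val r.2.2.2.2
        calc _ = ((r.2.1.1 : G) + (r.2.1.2 : G)) + (s r.1.1.1 + s r.1.1.2) := by
              dsimp only; abel
          _ = x := by rw [h]; abel⟩
  -- An element of `H` plus a lift of `q` reduces to `q` modulo `H`.
  have hmk : ∀ (a : H) (q : G ⧸ H), q ∈ (fun x : G => (QuotientAddGroup.mk x : G ⧸ H)) '' B →
      (QuotientAddGroup.mk ((a : G) + s q) : G ⧸ H) = q := by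
    intro a q hq
    rw [QuotientAddGroup.mk_add, (QuotientAddGroup.eq_zero_iff _).2 a.2, zero_add, (hs q hq).2]
  have hf : Function.Injective f := by
    rintro ⟨⟨⟨q₁, q₂⟩, hq₁, hq₂, hq⟩, ⟨⟨a₁, a₂⟩, ha⟩⟩ ⟨⟨⟨q₁', q₂'⟩, hq₁', hq₂', hq'⟩, ⟨⟨a₁', a₂'⟩, ha'⟩⟩ h
    have h₁ : (a₁ : G) + s q₁ = (a₁' : G) + s q₁' := congrArg (fun z => z.1.1) h
    have h₂ : (a₂ : G) + s q₂ = (a₂' : G) + s q₂' := congrArg (fun z => z.1.2) h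
    obtain rfl : q₁ = q₁' := by rw [← hmk a₁ q₁ hq₁, h₁, hmk a₁' q₁' hq₁']
    obtain rfl : q₂ = q₂' := by rw [← hmk a₂ q₂ hq₂, h₂, hmk a₂' q₂' hq₂']
    obtain rfl : a₁ = a₁' := Subtype.ext (add_right_cancel h₁)
    obtain rfl : a₂ = a₂' := Subtype.ext (add_right_cancel h₂)
    rfl
  calc g₁ * g₂ ≤ g₁ * Nat.card Q := Nat.mul_le_mul_left _ (hB _)
    _ = ∑ _q : Q, g₁ := by
      rw [Finset.sum_const, Finset.card_univ, Nat.card_eq_fintype_card, smul_eq_mul, mul_comm]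
    _ ≤ ∑ q : Q, Nat.card (R q) := Finset.sum_le_sum fun q _ => hA _
    _ = Nat.card (Σ q, R q) := Nat.card_sigma.symm
    _ ≤ _ := Nat.card_le_card_of_injective f hf

/-- Quotient construction for additive bases: if `{a₁, …, a_s} ⊆ H` is a `g₁`-additive basis of
`H` and `{b₁ + H, …, b_t + H}` is a `g₂`-additive basis of `G/H` (the cosets `b_i + H` being
distinct), then `{a_k + b_i}` is a `g₁g₂`-additive basis of `G`; consequently, if `G` is finite,
`ν_{g₁g₂}(G) ≤ ν_{g₁}(H) · ν_{g₂}(G/H)`. -/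
theorem stmt8 {G : Type*} [AddCommGroup G] (g₁ g₂ : ℕ) (hg₁ : 0 < g₁) (hg₂ : 0 < g₂)
    (H : AddSubgroup G) (A : Set H) (hAfin : A.Finite) (hA : IsAddBasis g₁ A)
    (B : Set G) (hBfin : B.Finite)
    (hBinj : Set.InjOn (fun x : G => (QuotientAddGroup.mk x : G ⧸ H)) B)
    (hB : IsAddBasis g₂ ((fun x : G => (QuotientAddGroup.mk x : G ⧸ H)) '' B)) :
    IsAddBasis (g₁ * g₂) {x : G | ∃ a ∈ A, ∃ b ∈ B, x = (a : G) + b} ∧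
    (Finite G → nuMin G (g₁ * g₂) ≤ nuMin H g₁ * nuMin (G ⧸ H) g₂) := by
  refine ⟨isAddBasis_add hAfin hA hBfin hB, fun _ => ?_⟩
  -- `A` and the image of `B` show that the infima defining `ν` are over nonempty sets,
  -- so they are attained.
  obtain ⟨A', hA'fin, hA', hA'card⟩ : nuMin H g₁ ∈
      {k : ℕ | ∃ A : Set H, A.Finite ∧ IsAddBasis g₁ A ∧ Nat.card A = k} :=
    Nat.sInf_mem ⟨_, A, hAfin, hA, rfl⟩
  obtain ⟨C, hCfin, hC, hCcard⟩ : nuMin (G ⧸ H) g₂ ∈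
      {k : ℕ | ∃ A : Set (G ⧸ H), A.Finite ∧ IsAddBasis g₂ A ∧ Nat.card A = k} :=
    Nat.sInf_mem ⟨_, _, hBfin.image _, hB, rfl⟩
  have himg : (fun x : G => (QuotientAddGroup.mk x : G ⧸ H)) '' (Quotient.out '' C) = C := by
    rw [Set.image_image]
    simp
  have hbasis : IsAddBasis (g₁ * g₂)
      {x : G | ∃ a ∈ A', ∃ b ∈ Quotient.out '' C, x = (a : G) + b} :=
    isAddBasis_add hA'fin hA' (hCfin.image _) (by rwa [himg])
  have hfin : {x : G | ∃ a ∈ A', ∃ b ∈ Quotient.out '' C, x = (a : G) + b}.Finite :=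
    Set.toFinite _
  refine (Nat.sInf_le ⟨_, hfin, hbasis, rfl⟩ : nuMin G (g₁ * g₂) ≤ _).trans ?_
  rw [← hA'card, ← hCcard, ← Nat.card_prod]
  have : Finite A' := hA'fin.to_subtype
  have : Finite C := hCfin.to_subtype
  refine Nat.card_le_card_of_surjective
    (fun p : A' × C => ⟨(p.1.1 : G) + Quotient.out p.2.1,
      ⟨p.1.1, p.1.2, _, ⟨p.2.1, p.2.2, rfl⟩, rfl⟩⟩) ?_
  rintro ⟨_, a, ha, _, ⟨c, hc, rfl⟩, rfl⟩
  exact ⟨(⟨a, ha⟩, ⟨c, hc⟩), rfl⟩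
end

section
/- Let g₁ and g₂ be positive integers, let G be an abelian group, and let H be a subgroup of G. Suppose {a₁, …, a_s} ⊆ H is a g₁-difference basis of H and {b₁ + H, …, b_t + H} is a g₂-difference basis of the quotient group G/H. Then the set {a_k + b_i : 1 ≤ k ≤ s, 1 ≤ i ≤ t} is a g₁g₂-difference basis of G. Consequently, if G is finite, then η_{g₁g₂}(G) ≤ η_{g₁}(H) · η_{g₂}(G/H). -/
/-- The quotient construction. One preimage in `B` is chosen for each coset of the basis of
`G ⧸ H`. Finiteness of `A` and `B` matters because `Nat.card` of an infinite set of
representations is `0`. -/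
lemma isDiffBasis_add {G : Type*} [AddCommGroup G] (g₁ g₂ : ℕ)
    (H : AddSubgroup G) (A : Set H) (hAfin : A.Finite) (hA : IsDiffBasis g₁ A)
    (B : Set G) (hBfin : B.Finite)
    (hB : IsDiffBasis g₂ ((fun x : G => (QuotientAddGroup.mk x : G ⧸ H)) '' B)) :
    IsDiffBasis (g₁ * g₂) {x : G | ∃ a ∈ A, ∃ b ∈ B, x = (a : G) + b} := by
  intro x
  have hSfin : {x : G | ∃ a ∈ A, ∃ b ∈ B, x = (a : G) + b}.Finite := by
    refine (Set.Finite.image2 (fun (a : H) (b : G) => (a : G) + b) hAfin hBfin).subset ?_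
    rintro _ ⟨a, ha, b, hb, rfl⟩
    exact ⟨a, ha, b, hb, rfl⟩
  -- A representation set inside a finite square is finite.
  have pairs_finite : ∀ {K : Type _} [AddCommGroup K] (S : Set K) (_ : S.Finite) (y : K),
      Finite {p : K × K // p.1 ∈ S ∧ p.2 ∈ S ∧ p.1 - p.2 = y} := by
    intro K _ S hS y
    exact ((hS.prod hS).subset fun p hp => ⟨hp.1, hp.2.1⟩ :
      {p : K × K | p.1 ∈ S ∧ p.2 ∈ S ∧ p.1 - p.2 = y}.Finite)
  choose! s hsB hs using fun (q : G ⧸ H)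
    (hq : q ∈ (fun x : G => (QuotientAddGroup.mk x : G ⧸ H)) '' B) => hq
  set B' := (fun x : G => (QuotientAddGroup.mk x : G ⧸ H)) '' B with hB'
  let R := {p : (G ⧸ H) × (G ⧸ H) // p.1 ∈ B' ∧ p.2 ∈ B' ∧ p.1 - p.2 = (QuotientAddGroup.mk x)}
  have hmem : ∀ r : R, x - (s r.1.1 - s r.1.2) ∈ H := by
    intro r
    rw [← QuotientAddGroup.eq_zero_iff, QuotientAddGroup.mk_sub, QuotientAddGroup.mk_sub]
    have h1 := hs _ r.2.1
    have h2 := hs _ r.2.2.1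
    simp only at h1 h2
    rw [h1, h2, r.2.2.2, sub_self]
  let h : R → H := fun r => ⟨_, hmem r⟩
  let F : R → Type _ := fun r => {p : H × H // p.1 ∈ A ∧ p.2 ∈ A ∧ p.1 - p.2 = h r}
  let T := {p : G × G // p.1 ∈ {x : G | ∃ a ∈ A, ∃ b ∈ B, x = (a : G) + b} ∧
    p.2 ∈ {x : G | ∃ a ∈ A, ∃ b ∈ B, x = (a : G) + b} ∧ p.1 - p.2 = x}
  have : Finite R := pairs_finite _ (hBfin.image _) _
  have : ∀ r, Finite (F r) := fun r => pairs_finite _ hAfin _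
  have : Finite T := pairs_finite _ hSfin _
  let f : (Σ r, F r) → T := fun z => ⟨((z.2.1.1 : G) + s z.1.1.1, (z.2.1.2 : G) + s z.1.1.2),
    ⟨_, z.2.2.1, _, hsB _ z.1.2.1, rfl⟩, ⟨_, z.2.2.2.1, _, hsB _ z.1.2.2.1, rfl⟩, by
      have := congrArg (Subtype.val : H → G) z.2.2.2.2
      simp only [AddSubgroup.coe_sub, h] at this
      simp only
      rw [add_sub_add_comm, this]
      abel⟩
  have hf : Function.Injective f := by
    rintro ⟨⟨⟨q₁, q₂⟩, hq⟩, ⟨⟨a₁, a₂⟩, ha⟩⟩ ⟨⟨⟨q₁', q₂'⟩, hq'⟩, ⟨⟨a₁', a₂'⟩, ha'⟩⟩ e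
    have e' := congrArg Subtype.val e
    simp only [f, Prod.mk.injEq] at e'
    obtain ⟨e₁, e₂⟩ := e'
    have key : ∀ (a a' : H) (q q' : G ⧸ H), q ∈ B' → q' ∈ B' →
        (a : G) + s q = a' + s q' → q = q' := by
      intro a a' q q' hq hq' e
      have h1 := hs _ hq
      have h2 := hs _ hq'
      simp only at h1 h2
      have e' := congrArg (QuotientAddGroup.mk : G → G ⧸ H) e
      rwa [QuotientAddGroup.mk_add, QuotientAddGroup.mk_add, h1, h2,
        (QuotientAddGroup.eq_zero_iff _).2 a.2, (QuotientAddGroup.eq_zero_iff _).2 a'.2,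
        zero_add, zero_add] at e'
    obtain rfl := key _ _ _ _ hq.1 hq'.1 e₁
    obtain rfl := key _ _ _ _ hq.2.1 hq'.2.1 e₂
    obtain rfl := Subtype.ext (add_right_cancel e₁)
    obtain rfl := Subtype.ext (add_right_cancel e₂)
    rfl
  calc g₁ * g₂ ≤ g₁ * Nat.card R := Nat.mul_le_mul_left _ (hB _)
    _ ≤ Nat.card (Σ r, F r) := by
      have := Fintype.ofFinite R
      rw [Nat.card_sigma, Nat.card_eq_fintype_card, mul_comm, ← smul_eq_mul]
      exact Finset.card_nsmul_le_sum _ _ _ fun r _ => hA (h r)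
    _ ≤ Nat.card T := Nat.card_le_card_of_injective f hf

/-- Quotient construction for difference bases: if `{a₁, …, a_s} ⊆ H` is a `g₁`-difference basis
of `H` and `{b₁ + H, …, b_t + H}` is a `g₂`-difference basis of `G/H` (the cosets `b_i + H` being
distinct), then `{a_k + b_i}` is a `g₁g₂`-difference basis of `G`; consequently, if `G` is
finite, `η_{g₁g₂}(G) ≤ η_{g₁}(H) · η_{g₂}(G/H)`. -/
theorem stmt9 {G : Type*} [AddCommGroup G] (g₁ g₂ : ℕ) (hg₁ : 0 < g₁) (hg₂ : 0 < g₂)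
    (H : AddSubgroup G) (A : Set H) (hAfin : A.Finite) (hA : IsDiffBasis g₁ A)
    (B : Set G) (hBfin : B.Finite)
    (hBinj : Set.InjOn (fun x : G => (QuotientAddGroup.mk x : G ⧸ H)) B)
    (hB : IsDiffBasis g₂ ((fun x : G => (QuotientAddGroup.mk x : G ⧸ H)) '' B)) :
    IsDiffBasis (g₁ * g₂) {x : G | ∃ a ∈ A, ∃ b ∈ B, x = (a : G) + b} ∧
    (Finite G → etaMin G (g₁ * g₂) ≤ etaMin H g₁ * etaMin (G ⧸ H) g₂) := by
  refine ⟨isDiffBasis_add g₁ g₂ H A hAfin hA B hBfin hB, fun _ => ?_⟩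
  -- The given bases show that both infima are over nonempty sets, hence attained.
  obtain ⟨A₀, hA₀fin, hA₀, hA₀c⟩ := Nat.sInf_mem
    (s := {k : ℕ | ∃ B : Set H, B.Finite ∧ IsDiffBasis g₁ B ∧ Nat.card B = k})
    ⟨_, A, hAfin, hA, rfl⟩
  obtain ⟨C, hCfin, hC, hCc⟩ := Nat.sInf_mem
    (s := {k : ℕ | ∃ B : Set (G ⧸ H), B.Finite ∧ IsDiffBasis g₂ B ∧ Nat.card B = k})
    ⟨_, _, hBfin.image _, hB, rfl⟩
  have hC' : (fun x : G => (QuotientAddGroup.mk x : G ⧸ H)) '' (Quotient.out '' C) = C := by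
    rw [Set.image_image]
    simp
  have hS := isDiffBasis_add g₁ g₂ H A₀ hA₀fin hA₀ (Quotient.out '' C) (hCfin.image _)
    (by rw [hC']; exact hC)
  have hle : etaMin G (g₁ * g₂) ≤
      Nat.card {x : G | ∃ a ∈ A₀, ∃ b ∈ Quotient.out '' C, x = (a : G) + b} :=
    Nat.sInf_le ⟨_, Set.toFinite _, hS, rfl⟩
  refine hle.trans ?_
  change _ ≤ sInf _ * sInf _
  rw [← hA₀c, ← hCc, ← Nat.card_prod]
  -- The set of sums is the image of `A₀ × C` under `(a, c) ↦ a + c.out`.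
  refine Nat.card_le_card_of_surjective (fun z : A₀ × C =>
    ⟨(z.1.1 : G) + Quotient.out z.2.1, _, z.1.2, _, ⟨_, z.2.2, rfl⟩, rfl⟩) ?_
  rintro ⟨_, a, ha, _, ⟨c, hc, rfl⟩, rfl⟩
  exact ⟨(⟨a, ha⟩, ⟨c, hc⟩), rfl⟩
end
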